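/- There exist a group G and an infinite set X with a sharply 3-transitive action of G on X such that every element of order 2 in G fixes exactly one point of X and no two distinct elements of order 2 in G commute. -/

import Mathlib

/-- An action is sharply 3-transitive if any triple of pairwise distinct points is taken
to any other such triple by a unique group element. -/
def SharplyThreeTransitive (G X : Type*) [Group G] [MulAction G X] : Prop :=
  ∀ x y z x' y' z' : X, x ≠ y → x ≠ z → y ≠ z → x' ≠ y' → x' ≠ z' → y' ≠ z' →
    ∃! g : G, g • x = x' ∧ g • y = y' ∧ g • z = z'

/-- A group `G` acting sharply 3-transitively on an infinite set `X` such that every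
involution of `G` fixes exactly one point and no two distinct involutions commute. -/
structure SharplyThreeTransitiveCharTwoWitness where
  G : Type*
  [grp : Group G]
  X : Type*
  [act : MulAction G X]
  infinite : Infinite X
  sharply3transitive : SharplyThreeTransitive G X
  involutions_unique_fixed_point : ∀ t : G, orderOf t = 2 → ∃! x : X, t • x = x
  involutions_no_commute : ∀ s t : G, orderOf s = 2 → orderOf t = 2 → s ≠ t →
    s * t ≠ t * s

namespace S3T

/-- The symmetric group on three letters. -/
abbrev S := Equiv.Perm (Fin 3)

/-- The point set: three base points and countably many regular orbits of `S`. -/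
inductive Pt : Type
  | base (i : Fin 3) : Pt
  | free (σ : S) (m : ℕ) : Pt

/-- The action of `S` on points. -/
def Pt.act (σ : S) : Pt → Pt
  | .base i => .base (σ i)
  | .free τ m => .free (σ * τ) m

instance : MulAction S Pt where
  smul := Pt.act
  one_smul p := by
    cases p with
    | base i => rfl
    | free τ m => change Pt.free (1 * τ) m = _; rw [one_mul]
  mul_smul a b p := by
    cases p with
    | base i => rfl
    | free τ m => change Pt.free (a * b * τ) m = Pt.free (a * (b * τ)) m; rw [mul_assoc]

@[simp] theorem smul_base (σ : S) (i : Fin 3) : σ • Pt.base i = Pt.base (σ i) := rfl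
@[simp] theorem smul_free (σ τ : S) (m : ℕ) : σ • Pt.free τ m = Pt.free (σ * τ) m := rfl

/-- The level of a point. -/
def Pt.idx : Pt → ℕ
  | .base _ => 0
  | .free _ m => m

@[simp] theorem idx_base (i : Fin 3) : (Pt.base i).idx = 0 := rfl
@[simp] theorem idx_free (σ : S) (m : ℕ) : (Pt.free σ m).idx = m := rfl

@[simp] theorem idx_smul (σ : S) (p : Pt) : (σ • p).idx = p.idx := by
  cases p <;> rfl

/-- Letters: tagged maps from the base triple to the points, other than the inclusion. -/
@[ext] structure Lt : Type where
  T : Fin 3 → Pt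
  n : ℕ
  ne : T ≠ Pt.base

/-- Conjugation action on triples. -/
def conj (σ : S) (T : Fin 3 → Pt) : Fin 3 → Pt := fun i => σ • T (σ⁻¹ i)

theorem conj_apply (σ : S) (T : Fin 3 → Pt) (i : Fin 3) : conj σ T (σ i) = σ • T i := by
  simp [conj]

theorem conj_one (T : Fin 3 → Pt) : conj 1 T = T := by
  funext i; simp [conj]

theorem conj_mul (σ τ : S) (T : Fin 3 → Pt) : conj (σ * τ) T = conj σ (conj τ T) := by
  funext i; simp [conj, mul_smul]

theorem conj_base (σ : S) : conj σ Pt.base = Pt.base := by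
  funext i; simp [conj]

instance : MulAction S Lt where
  smul σ y := ⟨conj σ y.T, y.n, fun h => y.ne (by
    have := congrArg (conj σ⁻¹) h
    rwa [← conj_mul, inv_mul_cancel, conj_one, conj_base] at this)⟩
  one_smul y := Lt.ext (conj_one _) rfl
  mul_smul a b y := Lt.ext (conj_mul _ _ _) rfl

@[simp] theorem smul_T (σ : S) (y : Lt) : (σ • y).T = conj σ y.T := rfl
@[simp] theorem smul_n (σ : S) (y : Lt) : (σ • y).n = y.n := rfl

/-- Signed letters. -/
abbrev SL := Lt × Bool

/-- action of `S` on signed letters -/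
def la (σ : S) (a : SL) : SL := (σ • a.1, a.2)

theorem la_mul (σ τ : S) (a : SL) : la (σ * τ) a = la σ (la τ a) := by
  simp [la, mul_smul]

theorem la_one (a : SL) : la 1 a = a := by simp [la]

/-- action of `S` on the free group -/
def fa (σ : S) : FreeGroup Lt →* FreeGroup Lt := FreeGroup.map (fun y => σ • y)

theorem fa_mk (σ : S) (l : List SL) : fa σ (FreeGroup.mk l) = FreeGroup.mk (l.map (la σ)) := by
  simp [fa]; rfl

theorem fa_of (σ : S) (y : Lt) : fa σ (FreeGroup.of y) = FreeGroup.of (σ • y) := by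
  simp [fa]

theorem fa_mul (σ τ : S) (f : FreeGroup Lt) : fa (σ * τ) f = fa σ (fa τ f) := by
  simp only [fa, FreeGroup.map.comp]
  congr 2
  funext y; simp [mul_smul]

theorem fa_one (f : FreeGroup Lt) : fa 1 f = f := by
  simp [fa]

/-- Edge relations. -/
abbrev Edge := SL → Pt → Pt → Prop

/-- Paths in a labelled graph; words act from the left. -/
def Path (E : Edge) : List SL → Pt → Pt → Prop
  | [], p, q => p = q
  | a :: l, p, q => ∃ r, Path E l p r ∧ E a r q

/-- Conditions on an edge relation. -/
structure Good0 (E : Edge) : Prop where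
  inv : ∀ y b p q, E (y, b) p q → E (y, !b) q p
  equi : ∀ (σ : S) a p q, E a p q → E (la σ a) (σ • p) (σ • q)
  func : ∀ a p q q', E a p q → E a p q' → q = q'
  loops : ∀ (y : Lt) b i, y.T i = Pt.base i → E (y, b) (Pt.base i) (Pt.base i)
  fin : ∃ N : ℕ, (∀ a p q, E a p q → p.idx ≤ N) ∧
    (∀ (y : Lt) b p q, E (y, b) p q → N < y.n → ∃ i, p = Pt.base i ∧ q = Pt.base i ∧ y.T i = Pt.base i)

section path
variable {E : Edge}

theorem path_append {l₁ l₂ : List SL} {p q : Pt} :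
    Path E (l₁ ++ l₂) p q ↔ ∃ r, Path E l₂ p r ∧ Path E l₁ r q := by
  induction l₁ generalizing q with
  | nil => simp [Path]
  | cons a l ih =>
    simp only [List.cons_append, Path, ih]
    constructor
    · rintro ⟨r, ⟨s, h1, h2⟩, h3⟩; exact ⟨s, h1, r, h2, h3⟩
    · rintro ⟨s, h1, r, h2, h3⟩; exact ⟨r, ⟨s, h1, h2⟩, h3⟩

theorem Path.mono {E' : Edge} (h : ∀ a p q, E a p q → E' a p q) {l : List SL} {p q : Pt}
    (hp : Path E l p q) : Path E' l p q := by
  induction l generalizing q with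
  | nil => exact hp
  | cons a l ih => obtain ⟨r, h1, h2⟩ := hp; exact ⟨r, ih h1, h _ _ _ h2⟩

theorem Path.func (hE : Good0 E) {l : List SL} {p q q' : Pt}
    (h : Path E l p q) (h' : Path E l p q') : q = q' := by
  induction l generalizing q q' with
  | nil => exact h.symm.trans h'
  | cons a l ih =>
    obtain ⟨r, h1, h2⟩ := h
    obtain ⟨r', h1', h2'⟩ := h'
    obtain rfl := ih h1 h1'
    exact hE.func _ _ _ _ h2 h2'

theorem Path.equi (hE : Good0 E) (σ : S) {l : List SL} {p q : Pt}
    (h : Path E l p q) : Path E (l.map (la σ)) (σ • p) (σ • q) := by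
  induction l generalizing q with
  | nil => exact congrArg _ h
  | cons a l ih =>
    obtain ⟨r, h1, h2⟩ := h
    exact ⟨σ • r, ih h1, hE.equi _ _ _ _ h2⟩

theorem Path.rev (hE : Good0 E) {l : List SL} {p q : Pt}
    (h : Path E l p q) : Path E (FreeGroup.invRev l) q p := by
  induction l generalizing q with
  | nil => exact h.symm
  | cons a l ih =>
    obtain ⟨r, h1, h2⟩ := h
    rw [FreeGroup.invRev_cons, path_append]
    exact ⟨r, ⟨q, rfl, hE.inv _ _ _ _ h2⟩, ih h1⟩

theorem Path.inj (hE : Good0 E) {l : List SL} {p p' q : Pt}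
    (h : Path E l p q) (h' : Path E l p' q) : p = p' :=
  Path.func hE (h.rev hE) (h'.rev hE)

theorem Path.red (hE : Good0 E) {l l' : List SL} (hl : FreeGroup.Red l l') {p q : Pt}
    (h : Path E l p q) : Path E l' p q := by
  induction hl with
  | refl => exact h
  | tail _ hs ih =>
    cases hs with
    | not =>
      rw [path_append] at ih ⊢
      obtain ⟨r, ⟨s, ⟨t, h1, h2⟩, h3⟩, h4⟩ := ih
      have := hE.inv _ _ _ _ h2
      obtain rfl := hE.func _ _ _ _ (by simpa using this) h3
      exact ⟨t, h1, h4⟩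

theorem Path.eq_of_one (hE : Good0 E) {l : List SL} (hl : FreeGroup.mk l = 1) {p q : Pt}
    (h : Path E l p q) : p = q := by
  classical
  have h1 : FreeGroup.reduce l = [] := by
    rw [← FreeGroup.toWord_mk, hl, FreeGroup.toWord_one]
  have := h.red hE FreeGroup.reduce.red
  rw [h1] at this
  exact this

/-- Paths of triples. -/
def TPath (E : Edge) (l : List SL) (U V : Fin 3 → Pt) : Prop := ∀ i, Path E l (U i) (V i)

theorem TPath.inj (hE : Good0 E) {l : List SL} {U V : Fin 3 → Pt} (h : TPath E l U V)
    (hU : Function.Injective U) : Function.Injective V := by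
  intro i j hij
  apply hU
  have := h j
  rw [← hij] at this
  exact Path.inj hE (h i) this

theorem TPath.rev (hE : Good0 E) {l : List SL} {U V : Fin 3 → Pt} (h : TPath E l U V) :
    TPath E (FreeGroup.invRev l) V U := fun i => (h i).rev hE

theorem TPath.append {l l' : List SL} {U V W : Fin 3 → Pt} (h : TPath E l U V)
    (h' : TPath E l' V W) : TPath E (l' ++ l) U W := fun i => path_append.2 ⟨_, h i, h' i⟩

theorem TPath.mono {E' : Edge} (hh : ∀ a p q, E a p q → E' a p q) {l : List SL}
    {U V : Fin 3 → Pt} (h : TPath E l U V) : TPath E' l U V := fun i => (h i).mono hh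

/-- Two sided action on triples. -/
def tw (σ τ : S) (U : Fin 3 → Pt) : Fin 3 → Pt := fun i => σ • U (τ i)

theorem tw_tw (σ τ σ' τ' : S) (U : Fin 3 → Pt) :
    tw σ τ (tw σ' τ' U) = tw (σ * σ') (τ' * τ) U := by
  funext i; simp [tw, mul_smul]

theorem tw_one (U : Fin 3 → Pt) : tw 1 1 U = U := by
  funext i; simp [tw]

theorem tw_inj {σ τ : S} {U : Fin 3 → Pt} (hU : Function.Injective U) :
    Function.Injective (tw σ τ U) := by
  intro i j h
  exact τ.injective (hU ((MulAction.injective σ) h))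

theorem TPath.tw (hE : Good0 E) (σ τ : S) {l : List SL} {U V : Fin 3 → Pt} (h : TPath E l U V) :
    TPath E (l.map (la σ)) (tw σ τ U) (tw σ τ V) := fun i => (h (τ i)).equi hE σ

end path

theorem base_inj : Function.Injective Pt.base := fun i j h => by cases h; rfl

/-- The potential condition. -/
structure Pot (E : Edge) (Φ : (Fin 3 → Pt) → FreeGroup Lt) : Prop where
  step : ∀ y U V, Function.Injective U → (∀ i, E (y, true) (U i) (V i)) →
    Φ V = FreeGroup.of y * Φ U
  equi : ∀ σ τ U, Φ (tw σ τ U) = fa σ (Φ U)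
  reach : ∀ U, Function.Injective U → ∃ T l, Φ U = FreeGroup.mk l ∧ TPath E l T U
  base : Φ Pt.base = 1

/-- Good edge relations. -/
structure Good (E : Edge) : Prop extends Good0 E where
  pot : ∃ Φ, Pot E Φ

section pot
variable {E : Edge} {Φ : (Fin 3 → Pt) → FreeGroup Lt}

theorem Pot.path (hE : Good0 E) (h : Pot E Φ) {l : List SL} {U V : Fin 3 → Pt}
    (hU : Function.Injective U) (hl : TPath E l U V) : Φ V = FreeGroup.mk l * Φ U := by
  induction l generalizing V with
  | nil =>
    have : U = V := funext hl
    rw [this, ← FreeGroup.one_eq_mk, one_mul]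
  | cons a l ih =>
    choose W h1 h2 using hl
    have hW : TPath E l U W := h1
    have hWi := hW.inj hE hU
    have e1 := ih hW
    have e3 : FreeGroup.mk (a :: l) = FreeGroup.mk [a] * FreeGroup.mk l := by
      rw [FreeGroup.mul_mk]; rfl
    rw [e3, mul_assoc, ← e1]
    have hV : TPath E [a] W V := fun i => ⟨W i, rfl, h2 i⟩
    obtain ⟨y, b⟩ := a
    cases b with
    | true => exact h.step y W V hWi h2
    | false =>
      have := h.step y V W (hV.inj hE hWi) (fun i => hE.inv _ _ _ _ (h2 i))
      rw [this]
      have e4 : FreeGroup.mk [(y, false)] = (FreeGroup.of y)⁻¹ := rfl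
      rw [e4, inv_mul_cancel_left]

theorem smul_eq_one_of_fix {σ : S} {T : Fin 3 → Pt} (hT : Function.Injective T)
    (h : ∀ i, σ • T i = T i) : σ = 1 := by
  by_cases hf : ∃ i τ m, T i = Pt.free τ m
  · obtain ⟨i, τ, m, hi⟩ := hf
    have := h i
    rw [hi, smul_free] at this
    simpa using this
  · have : ∀ i, ∃ j, T i = Pt.base j := by
      intro i
      cases hi : T i with
      | base j => exact ⟨j, rfl⟩
      | free τ m => exact absurd ⟨i, τ, m, hi⟩ hf
    choose k hk using this
    have hki : Function.Injective k := fun i j hij => hT (by rw [hk, hk, hij])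
    have hks := Finite.surjective_of_injective hki
    ext1 j
    obtain ⟨i, rfl⟩ := hks j
    have := h i
    rw [hk, smul_base] at this
    exact base_inj this

/-- Elements of the semidirect product fixing three points are trivial. -/
theorem Good.triv (hE : Good E) {l : List SL} {σ : S} {T : Fin 3 → Pt}
    (hT : Function.Injective T) (h : TPath E l (tw σ 1 T) T) : FreeGroup.mk l = 1 ∧ σ = 1 := by
  obtain ⟨Φ, hΦ⟩ := hE.pot
  obtain ⟨T₁, m, hm, hp⟩ := hΦ.reach T hT
  have h1 := hΦ.path hE.toGood0 (tw_inj hT) h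
  rw [hΦ.equi, hm, fa_mk] at h1
  have hp1 := ((hp.tw hE.toGood0 σ 1).append h).append (hp.rev hE.toGood0)
  have : FreeGroup.mk (FreeGroup.invRev m ++ (l ++ m.map (la σ))) = 1 := by
    rw [← FreeGroup.mul_mk, ← FreeGroup.mul_mk, ← FreeGroup.inv_mk, ← h1, inv_mul_cancel]
  have hfix : ∀ i, tw σ 1 T₁ i = T₁ i := fun i => (hp1 i).eq_of_one hE.toGood0 this
  have hT₁ := (hp.rev hE.toGood0).inj hE.toGood0 hT
  have hσ : σ = 1 := smul_eq_one_of_fix hT₁ hfix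
  refine ⟨?_, hσ⟩
  subst hσ
  have e : m.map (la 1) = m := by
    conv_rhs => rw [← List.map_id m]
    exact List.map_congr_left (fun a _ => la_one a)
  rw [e] at h1
  exact mul_right_cancel (b := FreeGroup.mk m) (by rw [one_mul]; exact h1.symm)

end pot

/-- The initial edge relation. -/
def E0 : Edge := fun a p q => ∃ i, p = Pt.base i ∧ q = Pt.base i ∧ a.1.T i = Pt.base i

theorem good_E0 : Good E0 where
  inv := by
    rintro y b p q ⟨i, h1, h2, h3⟩; exact ⟨i, h2, h1, h3⟩
  equi := by
    rintro σ a p q ⟨i, rfl, rfl, h3⟩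
    refine ⟨σ i, rfl, rfl, ?_⟩
    simp only [la, smul_T, conj_apply]
    rw [h3]; rfl
  func := by
    rintro a p q q' ⟨i, rfl, rfl, h3⟩ ⟨j, h1, rfl, h4⟩
    exact h1
  loops := fun y b i h => ⟨i, rfl, rfl, h⟩
  fin := by
    refine ⟨0, ?_, ?_⟩
    · rintro a p q ⟨i, rfl, rfl, h3⟩; exact le_rfl
    · rintro y b p q h _; exact h
  pot := by
    refine ⟨fun _ => 1, ?_, ?_, ?_, ?_⟩
    · intro y U V hU h
      exfalso
      choose k h1 h2 h3 using h
      have hk : Function.Injective k := fun i j hij => hU (by rw [h1, h1, hij])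
      have hks := Finite.surjective_of_injective hk
      apply y.ne
      funext j
      obtain ⟨i, rfl⟩ := hks j
      exact h3 i
    · intro σ τ U; simp
    · intro U hU
      exact ⟨U, [], rfl, fun i => rfl⟩
    · rfl

/-- formal inverse of a letter -/
def fl (a : SL) : SL := (a.1, !a.2)

theorem fl_fl (a : SL) : fl (fl a) = a := by simp [fl]
theorem fl_la (σ : S) (a : SL) : fl (la σ a) = la σ (fl a) := rfl
theorem mk_fl (a : SL) : FreeGroup.mk [fl a] = (FreeGroup.mk [a])⁻¹ := rfl
theorem fl_ne (a : SL) : fl a ≠ a := by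
  intro h
  have := congrArg Prod.snd h
  simp [fl] at this

theorem perm_two_fix : ∀ (ρ : S) (i j : Fin 3), ρ i = i → ρ j = j → i = j ∨ ρ = 1 := by decide

/-- Lemma 1: edges can be added. -/
theorem extend_edge {E : Edge} (hE : Good E) (a : SL) (p : Pt) (hp : ¬ ∃ q, E a p q) :
    ∃ E' : Edge, Good E' ∧ (∀ a p q, E a p q → E' a p q) ∧ ∃ q, E' a p q := by
  classical
  obtain ⟨N, hN1, hN2⟩ := hE.fin
  obtain ⟨Φ, hΦ⟩ := hE.pot
  have hN1' : ∀ a p q, E a p q → q.idx ≤ N := fun a p q h => hN1 _ _ _ (hE.inv _ _ _ _ h)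
  have hpN : ∃ m, N < m ∧ p.idx < m := ⟨N + p.idx + 1, by omega, by omega⟩
  obtain ⟨m, hm1, hm2⟩ := hpN
  -- freeness
  have hstab : ∀ ρ : S, ρ • a.1 = a.1 → ρ • p = p → ρ = 1 := by
    intro ρ h1 h2
    by_contra hne
    cases p with
    | free τ k => simp at h2; exact hne h2
    | base i =>
      have h2' : ρ i = i := base_inj h2
      have h3 : conj ρ a.1.T i = a.1.T i := by rw [← smul_T, h1]
      have h4 : ρ⁻¹ i = i := by rw [Equiv.Perm.inv_eq_iff_eq]; exact h2'.symm
      simp only [conj, h4] at h3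
      cases hT : a.1.T i with
      | free τ k => rw [hT] at h3; simp at h3; exact hne h3
      | base j =>
        rw [hT] at h3
        have h5 : ρ j = j := base_inj h3
        rcases perm_two_fix ρ i j h2' h5 with rfl | h
        · exact hp ⟨_, hE.loops a.1 a.2 i hT⟩
        · exact hne h
  have hstab2 : ∀ σ σ' : S, la σ a = la σ' a → σ • p = σ' • p → σ = σ' := by
    intro σ σ' h1 h2
    have := hstab (σ'⁻¹ * σ) ?_ ?_
    · rw [inv_mul_eq_one] at this; exact this.symm
    · have h3 : σ • a.1 = σ' • a.1 := congrArg Prod.fst h1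
      rw [mul_smul, h3, inv_smul_smul]
    · rw [mul_smul, h2, inv_smul_smul]
  let Nn : Edge := fun c u v => ∃ σ : S, (c = la σ a ∧ u = σ • p ∧ v = Pt.free σ m) ∨
    (c = fl (la σ a) ∧ u = Pt.free σ m ∧ v = σ • p)
  let E' : Edge := fun c u v => E c u v ∨ Nn c u v
  have hmono : ∀ a p q, E a p q → E' a p q := fun _ _ _ h => Or.inl h
  have hG0 : Good0 E' := by
    refine ⟨?_, ?_, ?_, ?_, ?_⟩
    · rintro y b u v (h | ⟨σ, ⟨h1, h2, h3⟩ | ⟨h1, h2, h3⟩⟩)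
      · exact Or.inl (hE.inv _ _ _ _ h)
      · refine Or.inr ⟨σ, Or.inr ⟨?_, h3, h2⟩⟩
        rw [← h1]; rfl
      · refine Or.inr ⟨σ, Or.inl ⟨?_, h3, h2⟩⟩
        rw [← fl_fl (la σ a), ← h1]; rfl
    · rintro ρ c u v (h | ⟨σ, ⟨h1, h2, h3⟩ | ⟨h1, h2, h3⟩⟩)
      · exact Or.inl (hE.equi _ _ _ _ h)
      · refine Or.inr ⟨ρ * σ, Or.inl ⟨?_, ?_, ?_⟩⟩
        · rw [h1, la_mul]
        · rw [h2, mul_smul]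
        · rw [h3]; rfl
      · refine Or.inr ⟨ρ * σ, Or.inr ⟨?_, ?_, ?_⟩⟩
        · rw [h1, la_mul]; rfl
        · rw [h2]; rfl
        · rw [h3, mul_smul]
    · have key : ∀ c u v v', E c u v → Nn c u v' → False := by
        rintro c u v v' h ⟨σ, ⟨h1, h2, h3⟩ | ⟨h1, h2, h3⟩⟩
        · have := hE.equi σ⁻¹ _ _ _ h
          rw [h1, h2, ← la_mul, inv_mul_cancel, la_one, inv_smul_smul] at this
          exact hp ⟨_, this⟩
        · have := hN1 _ _ _ h
          rw [h2] at this
          simp only [idx_free] at this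
          omega
      rintro c u v v' (h | h) (h' | h')
      · exact hE.func _ _ _ _ h h'
      · exact (key _ _ _ _ h h').elim
      · exact (key _ _ _ _ h' h).elim
      · rcases h with ⟨σ, ⟨h1, h2, h3⟩ | ⟨h1, h2, h3⟩⟩ <;>
        rcases h' with ⟨σ', ⟨h1', h2', h3'⟩ | ⟨h1', h2', h3'⟩⟩
        · obtain rfl := hstab2 σ σ' (h1.symm.trans h1') (h2.symm.trans h2')
          rw [h3, h3']
        · exfalso
          have := congrArg Pt.idx (h2.symm.trans h2')
          simp only [idx_free, idx_smul] at this
          omega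
        · exfalso
          have := congrArg Pt.idx (h2.symm.trans h2')
          simp only [idx_free, idx_smul] at this
          omega
        · have := h2.symm.trans h2'
          simp only [Pt.free.injEq, and_true] at this
          rw [h3, h3', this]
    · intro y b i h
      exact Or.inl (hE.loops y b i h)
    · refine ⟨m + a.1.n, ?_, ?_⟩
      · rintro c u v (h | ⟨σ, ⟨h1, h2, h3⟩ | ⟨h1, h2, h3⟩⟩)
        · have := hN1 _ _ _ h; omega
        · rw [h2, idx_smul]; omega
        · rw [h2]; simp only [idx_free]; omega
      · rintro y b u v (h | ⟨σ, ⟨h1, h2, h3⟩ | ⟨h1, h2, h3⟩⟩) hn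
        · exact hN2 _ _ _ _ h (by omega)
        · exfalso
          have : y = σ • a.1 := congrArg Prod.fst h1
          rw [this, smul_n] at hn; omega
        · exfalso
          have : y = σ • a.1 := congrArg Prod.fst h1
          rw [this, smul_n] at hn; omega
  -- fresh points
  let Fr : (Fin 3 → Pt) → Prop := fun U => ∃ i, (U i).idx = m
  have hEfr : ∀ c u v, E' c u v → u.idx ≠ m → v.idx ≠ m → E c u v := by
    rintro c u v (h | ⟨σ, ⟨h1, h2, h3⟩ | ⟨h1, h2, h3⟩⟩) hu hv
    · exact h
    · rw [h3] at hv; exact absurd rfl hv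
    · rw [h2] at hu; exact absurd rfl hu
  have hEm : ∀ c u v, E c u v → u.idx ≠ m := by
    intro c u v h; have := hN1 _ _ _ h; omega
  have key1 : ∀ c u v, E' c u v → u.idx = m → ∃ σ, c = fl (la σ a) ∧ u = Pt.free σ m := by
    rintro c u v (h | ⟨σ, ⟨h1, h2, h3⟩ | ⟨h1, h2, h3⟩⟩) hu
    · exact absurd hu (hEm _ _ _ h)
    · rw [h2, idx_smul] at hu; omega
    · exact ⟨σ, h1, h2⟩
  have key2 : ∀ c u v σ, E' c u v → c = fl (la σ a) → v.idx ≠ m := by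
    rintro c u v σ (h | ⟨σ', ⟨h1, h2, h3⟩ | ⟨h1, h2, h3⟩⟩) hc hv
    · have := hN1' _ _ _ h; omega
    · have := congrArg Prod.snd (h1.symm.trans hc)
      simp [la, fl] at this
    · rw [h3, idx_smul] at hv; omega
  have keyV : ∀ c U V, Fr U → (∀ i, E' c (U i) (V i)) → ¬ Fr V := by
    rintro c U V ⟨i, hi⟩ h ⟨j, hj⟩
    obtain ⟨σ, h1, h2⟩ := key1 _ _ _ (h i) hi
    exact key2 _ _ _ σ (h j) h1 hj
  have keyc : ∀ c c' U (V V' : Fin 3 → Pt), Fr U → (∀ i, E' c (U i) (V i)) → (∀ i, E' c' (U i) (V' i)) →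
      c = c' ∧ V = V' := by
    rintro c c' U V V' ⟨i, hi⟩ h h'
    obtain ⟨σ, h1, h2⟩ := key1 _ _ _ (h i) hi
    obtain ⟨σ', h1', h2'⟩ := key1 _ _ _ (h' i) hi
    have := h2.symm.trans h2'
    simp only [Pt.free.injEq, and_true] at this
    subst this
    have hc : c = c' := h1.trans h1'.symm
    subst hc
    exact ⟨rfl, funext fun i => hG0.func _ _ _ _ (h i) (h' i)⟩
  have frtw : ∀ σ τ U, Fr (tw σ τ U) ↔ Fr U := by
    intro σ τ U
    simp only [Fr, tw, idx_smul]
    exact ⟨fun ⟨i, h⟩ => ⟨_, h⟩, fun ⟨i, h⟩ => ⟨τ⁻¹ i, by simpa using h⟩⟩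
  let Q : (Fin 3 → Pt) → SL × (Fin 3 → Pt) → Prop := fun U cV => ∀ i, E' cV.1 (U i) (cV.2 i)
  let Φ' : (Fin 3 → Pt) → FreeGroup Lt := fun U =>
    if Fr U then
      if h : ∃ cV, Q U cV then (FreeGroup.mk [h.choose.1])⁻¹ * Φ h.choose.2 else 1
    else Φ U
  have hΦn : ∀ U, ¬ Fr U → Φ' U = Φ U := fun U h => if_neg h
  have hΦf : ∀ U c V, Fr U → (∀ i, E' c (U i) (V i)) →
      Φ' U = (FreeGroup.mk [c])⁻¹ * Φ V := by
    intro U c V hU h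
    have hex : ∃ cV, Q U cV := ⟨(c, V), h⟩
    have e : Φ' U = (FreeGroup.mk [hex.choose.1])⁻¹ * Φ hex.choose.2 := by
      simp only [Φ']
      rw [if_pos hU, dif_pos hex]
    obtain ⟨e1, e2⟩ := keyc _ _ _ _ _ hU hex.choose_spec h
    rw [e, e1, e2]
  have hΦ1 : ∀ U, Fr U → (¬ ∃ cV, Q U cV) → Φ' U = 1 := by
    intro U hU h
    simp only [Φ']
    rw [if_pos hU, dif_neg h]
  have hQtw : ∀ σ τ U c V, (∀ i, E' c (U i) (V i)) →
      ∀ i, E' (la σ c) (tw σ τ U i) (tw σ τ V i) := fun σ τ U c V h i => hG0.equi _ _ _ _ (h (τ i))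
  have hPot : Pot E' Φ' := by
    refine ⟨?_, ?_, ?_, ?_⟩
    · intro y U V hU h
      have h' : ∀ i, E' (y, false) (V i) (U i) := fun i => hG0.inv _ _ _ _ (h i)
      by_cases fU : Fr U
      · rw [hΦf U _ V fU h, hΦn V (keyV _ _ _ fU h)]
        change _ = FreeGroup.of y * ((FreeGroup.of y)⁻¹ * _)
        rw [mul_inv_cancel_left]
      · by_cases fV : Fr V
        · rw [hΦf V _ U fV h', hΦn U fU]
          rfl
        · rw [hΦn U fU, hΦn V fV]
          apply hΦ.step y U V hU
          intro i
          exact hEfr _ _ _ (h i) (fun hh => fU ⟨i, hh⟩) (fun hh => fV ⟨i, hh⟩)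
    · intro σ τ U
      by_cases fU : Fr U
      · have fU' := (frtw σ τ U).2 fU
        by_cases hex : ∃ cV, Q U cV
        · obtain ⟨⟨c, V⟩, h⟩ := hex
          rw [hΦf U c V fU h, hΦf _ _ _ fU' (hQtw σ τ U c V h), hΦ.equi, map_mul, map_inv, fa_mk]
          rfl
        · rw [hΦ1 U fU hex, hΦ1 _ fU', map_one]
          rintro ⟨⟨c, V⟩, h⟩
          apply hex
          refine ⟨(la σ⁻¹ c, tw σ⁻¹ τ⁻¹ V), ?_⟩
          have := hQtw σ⁻¹ τ⁻¹ _ _ _ h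
          rw [tw_tw, inv_mul_cancel, mul_inv_cancel, tw_one] at this
          exact this
      · rw [hΦn U fU, hΦn _ (fun h => fU ((frtw σ τ U).1 h)), hΦ.equi]
    · intro U hU
      by_cases fU : Fr U
      · by_cases hex : ∃ cV, Q U cV
        · obtain ⟨⟨c, V⟩, h⟩ := hex
          have hUV : TPath E' [c] U V := fun i => ⟨U i, rfl, h i⟩
          obtain ⟨T, l, h1, h2⟩ := hΦ.reach V (hUV.inj hG0 hU)
          refine ⟨T, [fl c] ++ l, ?_, ?_⟩
          · rw [hΦf U c V fU h, h1, ← FreeGroup.mul_mk, mk_fl]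
          · exact (h2.mono hmono).append (hUV.rev hG0)
        · exact ⟨U, [], hΦ1 U fU hex, fun i => rfl⟩
      · obtain ⟨T, l, h1, h2⟩ := hΦ.reach U hU
        exact ⟨T, l, (hΦn U fU).trans h1, h2.mono hmono⟩
    · rw [hΦn, hΦ.base]
      rintro ⟨i, hi⟩
      simp only [idx_base] at hi
      omega
  refine ⟨E', ⟨hG0, Φ', hPot⟩, hmono, Pt.free 1 m, ?_⟩
  exact Or.inr ⟨1, Or.inl ⟨(la_one a).symm, (one_smul _ _).symm, rfl⟩⟩

theorem perm_agree_two : ∀ (κ ρ : S) (i j : Fin 3), i ≠ j → κ i = ρ i → κ j = ρ j → κ = ρ := by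
  decide

theorem perm_fix_one : ∀ (κ ρ : S) (i : Fin 3), κ i = i → ρ i = i → κ = ρ ∨ κ = 1 ∨ ρ = 1 := by
  decide

theorem perm_nofix : ∀ (κ : S), (∀ i, κ i ≠ i) → κ * (κ * κ) = 1 := by decide

theorem perm_cube : ∀ (κ ρ : S), κ * (κ * κ) = 1 → ρ * (ρ * ρ) = 1 → κ ≠ 1 → ρ ≠ 1 →
    κ = ρ ∨ κ = ρ⁻¹ := by decide

theorem perm_cube_ne : ∀ (ρ : S), ρ * (ρ * ρ) = 1 → ρ = ρ⁻¹ → ρ = 1 := by decide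

theorem perm_swap : ∀ (ρ κ : S), ρ * (ρ * ρ) = 1 →
    Equiv.swap 0 1 * κ * Equiv.swap 0 1 = ρ⁻¹ → κ = ρ := by decide

/-- `ρ` acts on the triple `T` as the permutation `κ` of the indices. -/
def HRel (T : Fin 3 → Pt) (ρ κ : S) : Prop := ∀ i, ρ • T i = T (κ i)

theorem HRel.mul {T : Fin 3 → Pt} {ρ κ ρ' κ' : S} (h : HRel T ρ κ) (h' : HRel T ρ' κ') :
    HRel T (ρ * ρ') (κ * κ') := by
  intro i
  rw [mul_smul, h' i, h]; rfl

theorem HRel.inv {T : Fin 3 → Pt} {ρ κ : S} (h : HRel T ρ κ) : HRel T ρ⁻¹ κ⁻¹ := by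
  intro i
  rw [inv_smul_eq_iff, h]; simp

theorem HRel.left_one {T : Fin 3 → Pt} (hT : Function.Injective T) {ρ : S} (h : HRel T ρ 1) :
    ρ = 1 := smul_eq_one_of_fix hT h

theorem HRel.uniq {T : Fin 3 → Pt} (hT : Function.Injective T) {ρ κ κ' : S} (h : HRel T ρ κ)
    (h' : HRel T ρ κ') : κ = κ' := by
  ext1 i
  exact hT ((h i).symm.trans (h' i))

theorem HRel.right_one {T : Fin 3 → Pt} (hT : Function.Injective T) {κ : S} (h : HRel T 1 κ) :
    κ = 1 := by
  refine h.uniq hT ?_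
  intro i; simp

theorem order_base (T : Fin 3 → Pt) (hT : Function.Injective T) :
    ∃ τ : S, ∀ i j, T i = Pt.base j → T (τ j) = Pt.base j := by
  classical
  let e : {j // ∃ i, T i = Pt.base j} → {i // ∃ j, T i = Pt.base j} :=
    fun j => ⟨j.2.choose, j.1, j.2.choose_spec⟩
  have he : Function.Bijective e := by
    constructor
    · intro j j' h
      have h1 := j.2.choose_spec
      have h2 := j'.2.choose_spec
      have h3 : j.2.choose = j'.2.choose := congrArg Subtype.val h
      rw [h3] at h1
      exact Subtype.ext (base_inj (h1.symm.trans h2))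
    · rintro ⟨i, j, hij⟩
      refine ⟨⟨j, i, hij⟩, ?_⟩
      apply Subtype.ext
      have hex : ∃ i, T i = Pt.base j := ⟨i, hij⟩
      exact hT (hex.choose_spec.trans hij.symm)
  refine ⟨(Equiv.ofBijective e he).extendSubtype, ?_⟩
  intro i j hij
  have hex : ∃ i, T i = Pt.base j := ⟨i, hij⟩
  rw [Equiv.extendSubtype_apply_of_mem _ j hex]
  exact hex.choose_spec

theorem order_triple (T : Fin 3 → Pt) (hT : Function.Injective T) :
    ∃ τ : S, ∀ ρ κ : S, HRel (fun i => T (τ i)) ρ κ → κ = ρ := by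
  obtain ⟨τ, hτ⟩ := order_base T hT
  have hT' : Function.Injective (fun i => T (τ i)) := hT.comp τ.injective
  by_cases hJ : ∃ j i, T i = Pt.base j
  · obtain ⟨j, hj⟩ := hJ
    refine ⟨τ, fun ρ κ h => ?_⟩
    have hag : ∀ j, (∃ i, T i = Pt.base j) → κ j = ρ j ∧ ∃ i, T i = Pt.base (ρ j) := by
      rintro j ⟨i, hi⟩
      have h1 := h j
      simp only [hτ i j hi, smul_base] at h1
      have h2 := hτ _ _ h1.symm
      exact ⟨τ.injective (hT (h1.symm.trans h2.symm)), _, h1.symm⟩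
    obtain ⟨h1, h2⟩ := hag j hj
    by_cases hfix : ρ j = j
    · rcases perm_fix_one κ ρ j (h1.trans hfix) hfix with h3 | h3 | h3
      · exact h3
      · subst h3; exact (h.left_one hT').symm
      · subst h3; exact h.right_one hT'
    · exact perm_agree_two κ ρ j (ρ j) (Ne.symm hfix) h1 (hag _ h2).1
  · have hfree : ∀ (ρ : S) i, ρ • T i = T i → ρ = 1 := by
      intro ρ i h
      cases hi : T i with
      | base j => exact absurd ⟨j, i, hi⟩ hJ
      | free σ m => rw [hi] at h; simpa using h
    have hcub : ∀ ρ κ, HRel T ρ κ → ρ * (ρ * ρ) = 1 ∧ (κ = ρ ∨ κ = ρ⁻¹) := by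
      intro ρ κ h
      by_cases hρ : ρ = 1
      · subst hρ
        exact ⟨rfl, Or.inl (h.right_one hT)⟩
      · have h1 : κ * (κ * κ) = 1 := by
          apply perm_nofix
          intro i hi
          have := h i
          rw [hi] at this
          exact hρ (hfree _ _ this)
        have h2 := h.mul (h.mul h)
        rw [h1] at h2
        have h3 := h2.left_one hT
        refine ⟨h3, perm_cube κ ρ h1 h3 ?_ hρ⟩
        rintro rfl
        exact hρ (h.left_one hT)
    by_cases hbad : ∃ ρ, ρ ≠ 1 ∧ HRel T ρ ρ⁻¹
    · obtain ⟨ρ, hρ, hH⟩ := hbad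
      refine ⟨Equiv.swap 0 1, fun ρ' κ h => ?_⟩
      have h' : HRel T ρ' (Equiv.swap 0 1 * κ * Equiv.swap 0 1) := by
        intro i
        have := h (Equiv.swap 0 1 i)
        simpa using this
      obtain ⟨c1, c2⟩ := hcub _ _ h'
      apply perm_swap ρ' κ c1
      rcases c2 with c2 | c2
      · rw [c2] at h'
        by_cases hρ' : ρ' = 1
        · rw [c2, hρ']; rfl
        · exfalso
          have c3 := (hcub _ _ hH).1
          rcases perm_cube ρ' ρ c1 c3 hρ' hρ with e | e
          · rw [e] at h'
            exact hρ (perm_cube_ne ρ c3 (h'.uniq hT hH))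
          · rw [e] at h'
            have := h'.inv
            rw [inv_inv] at this
            exact hρ (perm_cube_ne ρ c3 (this.uniq hT hH))
      · exact c2
    · refine ⟨1, fun ρ κ h => ?_⟩
      have h' : HRel T ρ κ := h
      rcases (hcub _ _ h').2 with e | e
      · exact e
      · by_cases hρ : ρ = 1
        · rw [e, hρ]; rfl
        · rw [e] at h'
          exact absurd ⟨ρ, hρ, h'⟩ hbad

/-- Lemma 2: triples can be joined to the base triple. -/
theorem extend_triple {E : Edge} (hE : Good E) (T : Fin 3 → Pt) (hT : Function.Injective T) :
    ∃ E' : Edge, Good E' ∧ (∀ a p q, E a p q → E' a p q) ∧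
      ∃ l σ, TPath E' l Pt.base (tw σ 1 T) := by
  classical
  obtain ⟨N, hN1, hN2⟩ := hE.fin
  obtain ⟨Φ, hΦ⟩ := hE.pot
  have hG := hE.toGood0
  obtain ⟨T₁, l₀, hl₀, hp₀⟩ := hΦ.reach T hT
  have hT₁ := (hp₀.rev hG).inj hG hT
  have hΦ₁ : Φ T₁ = 1 := by
    have := hΦ.path hG hT₁ hp₀
    rw [hl₀] at this
    exact mul_left_cancel (a := FreeGroup.mk l₀) (by rw [mul_one]; exact this.symm)
  obtain ⟨τ₀, hord⟩ := order_triple T₁ hT₁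
  obtain ⟨T₂, hT₂def⟩ : ∃ T₂, T₂ = tw 1 τ₀ T₁ := ⟨_, rfl⟩
  have hT₂ : Function.Injective T₂ := by rw [hT₂def]; exact tw_inj hT₁
  have hΦ₂ : ∀ σ τ, Φ (tw σ τ T₂) = 1 := by
    intro σ τ
    rw [hT₂def, hΦ.equi, hΦ.equi, hΦ₁, map_one, map_one]
  have hord : ∀ ρ κ : S, HRel T₂ ρ κ → κ = ρ := by
    intro ρ κ h
    apply hord ρ κ
    rw [hT₂def] at h
    simpa [HRel, tw] using h
  have twbase : ∀ κ : S, tw κ κ⁻¹ Pt.base = Pt.base := by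
    intro κ; funext i; simp [tw]
  have finish : ∀ (E' : Edge), Good E' → (∀ a p q, E a p q → E' a p q) →
      (∃ l σ τ, TPath E' l Pt.base (tw σ τ T₂)) → ∃ l σ, TPath E' l Pt.base (tw σ 1 T) := by
    rintro E' hE' hmono ⟨l, σ, τ, h⟩
    have h1 := h.append (((hp₀.mono hmono).tw hE'.toGood0 1 τ₀).tw hE'.toGood0 σ τ |> fun h => by
      rw [hT₂def]; exact h)
    rw [tw_tw, mul_one] at h1
    have h2 := h1.tw hE'.toGood0 (τ₀ * τ) (τ₀ * τ)⁻¹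
    rw [twbase, tw_tw, mul_inv_cancel] at h2
    exact ⟨_, _, h2⟩
  by_cases hr : ∃ l σ τ, TPath E l Pt.base (tw σ τ T₂)
  · exact ⟨E, hE, fun _ _ _ h => h, finish E hE (fun _ _ _ h => h) hr⟩
  let y₀ : Lt := ⟨T₂, N + 1, by
    intro h
    apply hr
    refine ⟨[], 1, 1, ?_⟩
    rw [tw_one, h]
    exact fun i => rfl⟩
  let Nn : Edge := fun c u v => ∃ (σ : S) (j : Fin 3), c.1 = σ • y₀ ∧
    ((c.2 = true ∧ u = Pt.base j ∧ v = c.1.T j) ∨ (c.2 = false ∧ v = Pt.base j ∧ u = c.1.T j))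
  let E' : Edge := fun c u v => E c u v ∨ Nn c u v
  have hmono : ∀ a p q, E a p q → E' a p q := fun _ _ _ h => Or.inl h
  have hTinj : ∀ σ : S, Function.Injective (σ • y₀).T := by
    intro σ i j h
    exact σ⁻¹.injective (hT₂ (MulAction.injective σ h))
  have keyE : ∀ (σ : S) u v b, E' (σ • y₀, b) u v → ∃ j, ((b = true ∧ u = Pt.base j ∧
      v = (σ • y₀).T j) ∨ (b = false ∧ v = Pt.base j ∧ u = (σ • y₀).T j)) := by
    rintro σ u v b (h | ⟨σ', j, h1, h2⟩)
    · obtain ⟨i, h1, h2, h3⟩ := hN2 _ _ _ _ h (by rw [smul_n]; exact Nat.lt_succ_self N)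
      refine ⟨i, ?_⟩
      cases b with
      | true => exact Or.inl ⟨rfl, h1, h2.trans h3.symm⟩
      | false => exact Or.inr ⟨rfl, h2, h1.trans h3.symm⟩
    · exact ⟨j, h2⟩
  have hidx : ∀ (σ : S) j, ((σ • y₀).T j).idx ≤ ∑ i, (T₂ i).idx := by
    intro σ j
    simp only [smul_T, conj, idx_smul]
    exact Finset.single_le_sum (f := fun i => (T₂ i).idx) (fun i _ => Nat.zero_le _)
      (Finset.mem_univ (σ⁻¹ j))
  have hG0 : Good0 E' := by
    refine ⟨?_, ?_, ?_, ?_, ?_⟩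
    · rintro y b u v (h | ⟨σ, j, h1, ⟨h2, h3, h4⟩ | ⟨h2, h3, h4⟩⟩)
      · exact Or.inl (hE.inv _ _ _ _ h)
      · exact Or.inr ⟨σ, j, h1, Or.inr ⟨by simpa using h2, h3, h4⟩⟩
      · exact Or.inr ⟨σ, j, h1, Or.inl ⟨by simpa using h2, h3, h4⟩⟩
    · rintro ρ c u v (h | ⟨σ, j, h1, ⟨h2, h3, h4⟩ | ⟨h2, h3, h4⟩⟩)
      · exact Or.inl (hE.equi _ _ _ _ h)
      · refine Or.inr ⟨ρ * σ, ρ j, ?_, Or.inl ⟨h2, by rw [h3]; rfl, ?_⟩⟩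
        · rw [mul_smul, ← h1]; rfl
        · rw [h4]; simp only [la, smul_T, conj_apply]
      · refine Or.inr ⟨ρ * σ, ρ j, ?_, Or.inr ⟨h2, by rw [h3]; rfl, ?_⟩⟩
        · rw [mul_smul, ← h1]; rfl
        · rw [h4]; simp only [la, smul_T, conj_apply]
    · have key : ∀ (σ : S) b u v v', E' (σ • y₀, b) u v → E' (σ • y₀, b) u v' → v = v' := by
        intro σ b u v v' h h'
        obtain ⟨j, ⟨h1, h2, h3⟩ | ⟨h1, h2, h3⟩⟩ := keyE _ _ _ _ h <;>
        obtain ⟨j', ⟨h1', h2', h3'⟩ | ⟨h1', h2', h3'⟩⟩ := keyE _ _ _ _ h'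
        · have := base_inj (h2.symm.trans h2')
          rw [h3, h3', this]
        · rw [h1] at h1'; cases h1'
        · rw [h1] at h1'; cases h1'
        · have := hTinj σ (h3.symm.trans h3')
          rw [h2, h2', this]
      rintro ⟨y, b⟩ u v v' h h'
      by_cases hy : ∃ σ : S, y = σ • y₀
      · obtain ⟨σ, rfl⟩ := hy
        exact key _ _ _ _ _ h h'
      · rcases h with h | ⟨σ, j, h1, _⟩
        · rcases h' with h' | ⟨σ, j, h1, _⟩
          · exact hE.func _ _ _ _ h h'
          · exact absurd ⟨σ, h1⟩ hy
        · exact absurd ⟨σ, h1⟩ hy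
    · intro y b i h
      exact Or.inl (hE.loops y b i h)
    · refine ⟨N + 1 + ∑ i, (T₂ i).idx, ?_, ?_⟩
      · rintro c u v (h | ⟨σ, j, h1, ⟨h2, h3, h4⟩ | ⟨h2, h3, h4⟩⟩)
        · have := hN1 _ _ _ h; omega
        · rw [h3, idx_base]; omega
        · have := hidx σ j
          rw [h4, h1]; omega
      · rintro y b u v (h | ⟨σ, j, h1, _⟩) hn
        · exact hN2 _ _ _ _ h (by omega)
        · exfalso
          simp only at h1
          rw [h1, smul_n] at hn
          change _ < N + 1 at hn
          omega
  let C : S → (Fin 3 → Pt) → Prop := fun σ U => ∃ τ m, TPath E m (tw σ τ T₂) U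
  have hCuniq : ∀ σ σ' U, C σ U → C σ' U → σ • y₀ = σ' • y₀ := by
    rintro σ σ' U ⟨τ, m, h⟩ ⟨τ', m', h'⟩
    have h1 := h.append (h'.rev hG)
    have h2 := hΦ.path hG (tw_inj hT₂) h1
    rw [hΦ₂, hΦ₂, mul_one] at h2
    have h3 : tw σ τ T₂ = tw σ' τ' T₂ := funext fun i => (h1 i).eq_of_one hG h2.symm
    have h4 : HRel T₂ (σ'⁻¹ * σ) (τ' * τ⁻¹) := by
      intro i
      have := congrFun h3 (τ⁻¹ i)
      simp only [tw] at this
      rw [show τ (τ⁻¹ i) = i by simp] at this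
      rw [mul_smul, this, inv_smul_smul]; rfl
    have h5 := hord _ _ h4
    rw [h5] at h4
    have h6 : (σ'⁻¹ * σ) • y₀ = y₀ := by
      apply Lt.ext
      · funext i
        simp only [smul_T, conj]
        change _ • T₂ _ = T₂ i
        rw [h4]; simp
      · rfl
    rw [mul_smul, inv_smul_eq_iff] at h6
    exact h6
  have hCpath : ∀ σ U V m, C σ U → TPath E m U V → C σ V := by
    rintro σ U V m ⟨τ, m', h⟩ h'
    exact ⟨τ, _, h.append h'⟩
  have hCtw : ∀ ρ κ σ U, C σ U → C (ρ * σ) (tw ρ κ U) := by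
    rintro ρ κ σ U ⟨τ, m, h⟩
    have := h.tw hG ρ κ
    rw [tw_tw] at this
    exact ⟨_, _, this⟩
  have hCbase : ∀ σ, ¬ C σ Pt.base := by
    rintro σ ⟨τ, m, h⟩
    exact hr ⟨_, _, _, h.rev hG⟩
  let Φ' : (Fin 3 → Pt) → FreeGroup Lt := fun U =>
    if h : ∃ σ, C σ U then Φ U * FreeGroup.of (h.choose • y₀) else Φ U
  have hΦC : ∀ σ U, C σ U → Φ' U = Φ U * FreeGroup.of (σ • y₀) := by
    intro σ U h
    have hex : ∃ σ, C σ U := ⟨σ, h⟩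
    have e : Φ' U = Φ U * FreeGroup.of (hex.choose • y₀) := dif_pos hex
    rw [e, hCuniq _ _ _ hex.choose_spec h]
  have hΦN : ∀ U, (¬ ∃ σ, C σ U) → Φ' U = Φ U := fun U h => dif_neg h
  have hPot : Pot E' Φ' := by
    refine ⟨?_, ?_, ?_, ?_⟩
    · intro y U V hU h
      by_cases hy : ∃ σ : S, y = σ • y₀
      · obtain ⟨σ, rfl⟩ := hy
        have h1 : ∀ i, ∃ j, U i = Pt.base j ∧ V i = (σ • y₀).T j := by
          intro i
          obtain ⟨j, ⟨h1, h2, h3⟩ | ⟨h1, h2, h3⟩⟩ := keyE _ _ _ _ (h i)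
          · exact ⟨j, h2, h3⟩
          · cases h1
        choose k hk1 hk2 using h1
        have hki : Function.Injective k := fun i j hij => hU (by rw [hk1, hk1, hij])
        let κ : S := Equiv.ofBijective k (Finite.injective_iff_bijective.1 hki)
        have hUe : U = tw κ 1 Pt.base := funext fun i => hk1 i
        have hVe : V = tw σ (σ⁻¹ * κ) T₂ := funext fun i => hk2 i
        have hUC : ¬ ∃ σ, C σ U := by
          rintro ⟨σ', h'⟩
          have := hCtw κ⁻¹ 1 _ _ h'
          rw [hUe, tw_tw, inv_mul_cancel, one_mul, tw_one] at this
          exact hCbase _ this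
        have hVC : C σ V := ⟨σ⁻¹ * κ, [], by rw [hVe]; exact fun i => rfl⟩
        rw [hΦN U hUC, hΦC σ V hVC, hUe, hΦ.equi, hΦ.base, map_one, hVe, hΦ₂, one_mul, mul_one]
      · have hUV : TPath E [(y, true)] U V := by
          intro i
          refine ⟨U i, rfl, ?_⟩
          rcases h i with h | ⟨σ, j, h1, _⟩
          · exact h
          · exact absurd ⟨σ, h1⟩ hy
        have hs := hΦ.path hG hU hUV
        by_cases hC : ∃ σ, C σ U
        · obtain ⟨σ, hC⟩ := hC
          rw [hΦC σ U hC, hΦC σ V (hCpath _ _ _ _ hC hUV), hs, mul_assoc]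
          rfl
        · rw [hΦN U hC, hΦN V, hs]
          · rfl
          · rintro ⟨σ, h'⟩
            exact hC ⟨σ, hCpath _ _ _ _ h' (hUV.rev hG)⟩
    · intro σ τ U
      by_cases hC : ∃ σ, C σ U
      · obtain ⟨ρ, hC⟩ := hC
        rw [hΦC ρ U hC, hΦC _ _ (hCtw σ τ ρ U hC), hΦ.equi, map_mul, fa_of, mul_smul]
      · rw [hΦN U hC, hΦN, hΦ.equi]
        rintro ⟨ρ, h⟩
        have := hCtw σ⁻¹ τ⁻¹ _ _ h
        rw [tw_tw, inv_mul_cancel, mul_inv_cancel, tw_one] at this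
        exact hC ⟨_, this⟩
    · intro U hU
      by_cases hC : ∃ σ, C σ U
      · obtain ⟨σ, hC⟩ := hC
        obtain ⟨τ, m, hm⟩ := hC
        refine ⟨fun i => Pt.base (σ (τ i)), m ++ [(σ • y₀, true)], ?_, ?_⟩
        · rw [hΦC σ U ⟨τ, m, hm⟩, hΦ.path hG (tw_inj hT₂) hm, hΦ₂, mul_one, ← FreeGroup.mul_mk]
          rfl
        · have h1 : TPath E' [(σ • y₀, true)] (fun i => Pt.base (σ (τ i))) (tw σ τ T₂) := by
            intro i
            refine ⟨_, rfl, Or.inr ⟨σ, σ (τ i), rfl, Or.inl ⟨rfl, rfl, ?_⟩⟩⟩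
            simp only [smul_T, conj_apply]
            rfl
          exact h1.append (hm.mono hmono)
      · obtain ⟨T, l, h1, h2⟩ := hΦ.reach U hU
        exact ⟨T, l, (hΦN U hC).trans h1, h2.mono hmono⟩
    · rw [hΦN, hΦ.base]
      rintro ⟨σ, h⟩
      exact hCbase _ h
  have hGood : Good E' := ⟨hG0, Φ', hPot⟩
  refine ⟨E', hGood, hmono, finish E' hGood hmono ⟨[(y₀, true)], 1, 1, ?_⟩⟩
  rw [tw_one]
  intro i
  exact ⟨_, rfl, Or.inr ⟨1, i, (one_smul _ _).symm, Or.inl ⟨rfl, rfl, rfl⟩⟩⟩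

/-! The generic action -/

instance : Countable Pt := by
  have : Function.Injective (fun p : Pt => match p with
      | .base i => (Sum.inl i : Fin 3 ⊕ (S × ℕ))
      | .free σ m => Sum.inr (σ, m)) := by
    intro p q h
    cases p <;> cases q <;> simp_all
  exact this.countable

instance : Countable Lt := by
  have : Function.Injective (fun y : Lt => (y.T, y.n)) := by
    intro y z h
    simp only [Prod.mk.injEq] at h
    exact Lt.ext h.1 h.2
  exact this.countable

instance : Infinite Pt := by
  have : Function.Injective (fun m : ℕ => Pt.free 1 m) := by
    intro m n h; cases h; rfl
  exact Infinite.of_injective _ this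

/-- The poset of good edge relations. -/
def GE := {E : Edge // Good E}

instance : Preorder GE where
  le E F := ∀ a p q, E.1 a p q → F.1 a p q
  le_refl _ _ _ _ h := h
  le_trans _ _ _ h h' a p q hh := h' _ _ _ (h _ _ _ hh)

/-- The edge requirements. -/
def cofEdge (a : SL) (p : Pt) : Order.Cofinal GE where
  carrier := {E | ∃ q, E.1 a p q}
  isCofinal E := by
    by_cases hp : ∃ q, E.1 a p q
    · exact ⟨E, hp, le_refl _⟩
    · obtain ⟨E', h1, h2, h3⟩ := extend_edge E.2 a p hp
      exact ⟨⟨E', h1⟩, h3, h2⟩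

/-- The triple requirements. -/
def cofTriple (T : {T : Fin 3 → Pt // Function.Injective T}) : Order.Cofinal GE where
  carrier := {E | ∃ l σ, TPath E.1 l Pt.base (tw σ 1 T.1)}
  isCofinal E := by
    obtain ⟨E', h1, h2, h3⟩ := extend_triple E.2 T.1 T.2
    exact ⟨⟨E', h1⟩, h3, h2⟩

theorem exists_ideal : ∃ I : Order.Ideal GE,
    (∀ a p, ∃ E ∈ I, ∃ q, E.1 a p q) ∧
    (∀ T, Function.Injective T → ∃ E ∈ I, ∃ l σ, TPath E.1 l Pt.base (tw σ 1 T)) := by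
  classical
  let _ : Encodable ((SL × Pt) ⊕ {T : Fin 3 → Pt // Function.Injective T}) :=
    Encodable.ofCountable _
  let D : (SL × Pt) ⊕ {T : Fin 3 → Pt // Function.Injective T} → Order.Cofinal GE :=
    Sum.elim (fun x => cofEdge x.1 x.2) cofTriple
  refine ⟨Order.idealOfCofinals ⟨E0, good_E0⟩ D, ?_, ?_⟩
  · intro a p
    obtain ⟨E, h1, h2⟩ := Order.cofinal_meets_idealOfCofinals ⟨E0, good_E0⟩ D (Sum.inl (a, p))
    exact ⟨E, h2, h1⟩
  · intro T hT
    obtain ⟨E, h1, h2⟩ := Order.cofinal_meets_idealOfCofinals ⟨E0, good_E0⟩ D (Sum.inr ⟨T, hT⟩)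
    exact ⟨E, h2, h1⟩

theorem exists_generic : ∃ π : Lt → Equiv.Perm Pt,
    (∀ (σ : S) y p, σ • π y p = π (σ • y) (σ • p)) ∧
    (∀ T : Fin 3 → Pt, Function.Injective T → ∃ (f : FreeGroup Lt) (σ : S), ∀ i,
      FreeGroup.lift π f (Pt.base i) = σ • T i) ∧
    (∀ (f : FreeGroup Lt) (σ : S) (T : Fin 3 → Pt), Function.Injective T →
      (∀ i, FreeGroup.lift π f (σ • T i) = T i) → f = 1 ∧ σ = 1) := by
  classical
  obtain ⟨I, hI1, hI2⟩ := exists_ideal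
  have hfun : ∀ {E E' : GE}, E ∈ I → E' ∈ I → ∀ a p q q', E.1 a p q → E'.1 a p q' → q = q' := by
    intro E E' hE hE' a p q q' h h'
    obtain ⟨F, hF, h1, h2⟩ := I.directed E hE E' hE'
    exact F.2.func _ _ _ _ (h1 _ _ _ h) (h2 _ _ _ h')
  choose EE hEE nx hnx using hI1
  have key : ∀ {E : GE}, E ∈ I → ∀ a p q, E.1 a p q → nx a p = q := fun hE a p q h =>
    hfun (hEE a p) hE _ _ _ _ (hnx a p) h
  have hinv : ∀ y b p, nx (y, !b) (nx (y, b) p) = p := fun y b p =>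
    key (hEE (y, b) p) _ _ _ ((EE (y, b) p).2.inv _ _ _ _ (hnx _ _))
  let π : Lt → Equiv.Perm Pt := fun y =>
    ⟨nx (y, true), nx (y, false), hinv y true, hinv y false⟩
  have hlet : ∀ a p, FreeGroup.lift π (FreeGroup.mk [a]) p = nx a p := by
    rintro ⟨y, b⟩ p
    cases b with
    | true =>
      change FreeGroup.lift π (FreeGroup.of y) p = _
      rw [FreeGroup.lift_apply_of]; rfl
    | false =>
      change FreeGroup.lift π (FreeGroup.of y)⁻¹ p = _
      rw [map_inv, FreeGroup.lift_apply_of]; rfl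
  have hcons : ∀ a l p, FreeGroup.lift π (FreeGroup.mk (a :: l)) p
      = nx a (FreeGroup.lift π (FreeGroup.mk l) p) := by
    intro a l p
    have e3 : FreeGroup.mk (a :: l) = FreeGroup.mk [a] * FreeGroup.mk l := by
      rw [FreeGroup.mul_mk]; rfl
    rw [e3, map_mul, Equiv.Perm.mul_apply, hlet]
  have hpath : ∀ {E : GE}, E ∈ I → ∀ l p q, Path E.1 l p q →
      FreeGroup.lift π (FreeGroup.mk l) p = q := by
    intro E hE l
    induction l with
    | nil =>
      intro p q h
      rw [← FreeGroup.one_eq_mk, map_one]; exact h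
    | cons a l ih =>
      rintro p q ⟨r, h1, h2⟩
      rw [hcons, ih _ _ h1, key hE _ _ _ h2]
  have hpath2 : ∀ l p, ∃ E ∈ I, Path E.1 l p (FreeGroup.lift π (FreeGroup.mk l) p) := by
    intro l p
    induction l with
    | nil =>
      obtain ⟨E, hE⟩ := I.nonempty
      refine ⟨E, hE, ?_⟩
      rw [← FreeGroup.one_eq_mk, map_one]; rfl
    | cons a l ih =>
      obtain ⟨E, hE, h⟩ := ih
      obtain ⟨F, hF, h1, h2⟩ := I.directed E hE _ (hEE a (FreeGroup.lift π (FreeGroup.mk l) p))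
      refine ⟨F, hF, _, h.mono h1, ?_⟩
      rw [hcons]
      exact h2 _ _ _ (hnx _ _)
  refine ⟨π, ?_, ?_, ?_⟩
  · intro σ y p
    symm
    exact key (hEE (y, true) p) _ _ _ ((EE (y, true) p).2.equi σ _ _ _ (hnx _ _))
  · intro T hT
    obtain ⟨E, hE, l, σ, h⟩ := hI2 T hT
    exact ⟨FreeGroup.mk l, σ, fun i => hpath hE _ _ _ (h i)⟩
  · intro f σ T hT h
    have hf : f = FreeGroup.mk f.toWord := FreeGroup.mk_toWord.symm
    rw [hf] at h ⊢
    generalize f.toWord = l at h ⊢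
    obtain ⟨E0, hE0, h0⟩ := hpath2 l (σ • T 0)
    obtain ⟨E1, hE1, h1⟩ := hpath2 l (σ • T 1)
    obtain ⟨E2, hE2, h2⟩ := hpath2 l (σ • T 2)
    rw [h] at h0 h1 h2
    obtain ⟨F, hF, a, b⟩ := I.directed E0 hE0 E1 hE1
    obtain ⟨F', hF', c, d⟩ := I.directed F hF E2 hE2
    refine F'.2.triv hT (l := l) (σ := σ) ?_
    intro i
    fin_cases i
    · exact (h0.mono a).mono c
    · exact (h1.mono b).mono c
    · exact h2.mono d

/-! Involutions in the semidirect product -/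

theorem invRev_snoc (l : List SL) (b : SL) :
    FreeGroup.invRev (l ++ [b]) = (b.1, !b.2) :: FreeGroup.invRev l := by
  simp [FreeGroup.invRev]

theorem word_split (σ : S) (L : List SL) (h : L.map (la σ) = FreeGroup.invRev L) :
    ∃ M : List SL, L = M ++ FreeGroup.invRev (M.map (la σ)) := by
  induction L using List.bidirectionalRec with
  | nil => exact ⟨[], rfl⟩
  | singleton a =>
    exfalso
    simp [FreeGroup.invRev, la] at h
  | cons_append a l b ih =>
    rw [← List.cons_append, invRev_snoc, FreeGroup.invRev_cons] at h
    simp only [List.map_cons, List.map_append, List.cons_append, List.cons.injEq,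
      List.map_nil] at h
    obtain ⟨h1, h2⟩ := h
    obtain ⟨h3, h4⟩ := List.append_inj' h2 (by simp [FreeGroup.invRev])
    obtain ⟨M, hM⟩ := ih h3
    refine ⟨a :: M, ?_⟩
    have e : FreeGroup.invRev (List.map (la σ) (a :: M))
        = FreeGroup.invRev (M.map (la σ)) ++ [b] := by
      rw [List.map_cons, FreeGroup.invRev_cons, h1]
      simp [FreeGroup.invRev]
    rw [e, List.cons_append, ← List.append_assoc, ← hM]

theorem invol_split (σ : S) (f : FreeGroup Lt) (h : f * fa σ f = 1) :
    ∃ k : FreeGroup Lt, f = k * (fa σ k)⁻¹ := by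
  classical
  have h1 : f.toWord.map (la σ) = FreeGroup.invRev f.toWord := by
    have hr : FreeGroup.IsReduced (f.toWord.map (la σ)) := by
      have := (FreeGroup.isReduced_toWord (x := f))
      unfold FreeGroup.IsReduced at this ⊢
      rw [List.isChain_map]
      refine this.imp ?_
      intro a b hab hh
      exact hab (MulAction.injective σ hh)
    have e : FreeGroup.mk (f.toWord.map (la σ)) = f⁻¹ := by
      rw [← fa_mk, FreeGroup.mk_toWord]
      exact (inv_eq_of_mul_eq_one_right h).symm
    rw [← FreeGroup.toWord_inv, ← e, FreeGroup.toWord_mk]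
    exact hr.reduce_eq.symm
  obtain ⟨M, hM⟩ := word_split σ _ h1
  refine ⟨FreeGroup.mk M, ?_⟩
  rw [fa_mk, FreeGroup.inv_mk, FreeGroup.mul_mk, ← hM, FreeGroup.mk_toWord]

/-- The action of `S` on the free group by automorphisms. -/
def phi : S →* MulAut (FreeGroup Lt) where
  toFun σ :=
    { toFun := fa σ
      invFun := fa σ⁻¹
      left_inv := fun f => by rw [← fa_mul, inv_mul_cancel, fa_one]
      right_inv := fun f => by rw [← fa_mul, mul_inv_cancel, fa_one]
      map_mul' := map_mul _ }
  map_one' := by ext1 f; exact fa_one f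
  map_mul' a b := by ext1 f; exact fa_mul a b f

theorem phi_apply (σ : S) (f : FreeGroup Lt) : phi σ f = fa σ f := rfl

/-- The group. -/
abbrev GG := SemidirectProduct (FreeGroup Lt) S phi

theorem involution_form (t : GG) (ht : t * t = 1) :
    ∃ k : FreeGroup Lt, t = SemidirectProduct.inl k * SemidirectProduct.inr t.right *
      (SemidirectProduct.inl k)⁻¹ := by
  have h1 := congrArg SemidirectProduct.left ht
  rw [SemidirectProduct.mul_left, phi_apply, SemidirectProduct.one_left] at h1
  obtain ⟨k, hk⟩ := invol_split _ _ h1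
  refine ⟨k, ?_⟩
  ext1
  · simp [phi_apply, hk]
  · simp

theorem involution_right (t : GG) (ht : t * t = 1) (h : t.right = 1) : t = 1 := by
  obtain ⟨k, hk⟩ := involution_form t ht
  rw [hk, h]; simp

theorem s3_comm : ∀ σ τ : S, (σ ≠ 1 ∧ τ ≠ 1 ∧ σ * σ = 1 ∧ τ * τ = 1 ∧ σ * τ = τ * σ) → σ = τ := by
  decide

theorem s3_fix : ∀ σ : S, σ ≠ 1 → σ * σ = 1 → ∃ i, σ i = i ∧ ∀ j, σ j = j → j = i := by
  decide

theorem sq_of_order {t : GG} (ht : orderOf t = 2) : t * t = 1 ∧ t.right ≠ 1 ∧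
    t.right * t.right = 1 := by
  have h1 : t * t = 1 := by rw [← pow_two, ← ht, pow_orderOf_eq_one]
  refine ⟨h1, ?_, ?_⟩
  · intro h
    have := involution_right t h1 h
    rw [this, orderOf_one] at ht
    omega
  · have := congrArg SemidirectProduct.right h1
    simpa using this

theorem no_commute (s t : GG) (hs : orderOf s = 2) (ht : orderOf t = 2) (hst : s ≠ t) :
    s * t ≠ t * s := by
  intro h
  obtain ⟨s1, s2, s3⟩ := sq_of_order hs
  obtain ⟨t1, t2, t3⟩ := sq_of_order ht
  have e : s.right = t.right := by
    refine s3_comm _ _ ⟨s2, t2, s3, t3, ?_⟩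
    have := congrArg SemidirectProduct.right h
    simpa using this
  have h2 : s * t = 1 := by
    refine involution_right _ ?_ ?_
    · calc s * t * (s * t) = s * t * (t * s) := by rw [h]
        _ = s * (t * t) * s := by simp only [mul_assoc]
        _ = 1 := by rw [t1, mul_one, s1]
    · rw [SemidirectProduct.mul_right, e, t3]
  exact hst (by rw [eq_inv_of_mul_eq_one_left h2, inv_eq_of_mul_eq_one_left t1])

theorem exists_action : ∃ act : MulAction GG Pt,
    (∀ T : Fin 3 → Pt, Function.Injective T → ∃ g : GG, ∀ i, act.smul g (Pt.base i) = T i) ∧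
    (∀ T : Fin 3 → Pt, Function.Injective T → ∀ g : GG, (∀ i, act.smul g (T i) = T i) → g = 1) ∧
    (∀ t : GG, orderOf t = 2 → ∃! x : Pt, act.smul t x = x) := by
  obtain ⟨π, h1, h2, h3⟩ := exists_generic
  let ρ : GG →* Equiv.Perm Pt := SemidirectProduct.lift (FreeGroup.lift π)
    (MulAction.toPermHom S Pt) (by
      intro σ
      ext y p
      change FreeGroup.lift π (fa σ (FreeGroup.of y)) p =
        σ • (FreeGroup.lift π (FreeGroup.of y) (σ⁻¹ • p))
      rw [fa_of, FreeGroup.lift_apply_of, FreeGroup.lift_apply_of, h1, smul_inv_smul])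
  have hl : ∀ f p, ρ (SemidirectProduct.inl f) p = FreeGroup.lift π f p := by
    intro f p; simp [ρ]
  have hr : ∀ σ p, ρ (SemidirectProduct.inr σ) p = σ • p := by
    intro σ p; simp [ρ]
  refine ⟨MulAction.compHom Pt ρ, ?_, ?_, ?_⟩
  · intro T hT
    obtain ⟨f, σ, h⟩ := h2 T hT
    refine ⟨SemidirectProduct.inr σ⁻¹ * SemidirectProduct.inl f, fun i => ?_⟩
    change ρ _ _ = _
    rw [map_mul, Equiv.Perm.mul_apply, hl, hr, h, inv_smul_smul]
  · intro T hT g h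
    have h4 := h3 g.left g.right T hT (fun i => by
      have : ρ g (T i) = T i := h i
      rw [← SemidirectProduct.inl_left_mul_inr_right g, map_mul, Equiv.Perm.mul_apply, hl, hr]
        at this
      exact this)
    exact SemidirectProduct.ext h4.1 h4.2
  · intro t ht
    obtain ⟨t1, t2, t3⟩ := sq_of_order ht
    obtain ⟨k, hk⟩ := involution_form t t1
    obtain ⟨i, hi, hu⟩ := s3_fix _ t2 t3
    have hfix : ∀ x, ρ t x = x ↔
        t.right • (ρ (SemidirectProduct.inl k))⁻¹ x = (ρ (SemidirectProduct.inl k))⁻¹ x := by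
      intro x
      conv_lhs => rw [hk]
      rw [map_mul, map_mul, Equiv.Perm.mul_apply, Equiv.Perm.mul_apply, hr, map_inv,
        ← Equiv.Perm.eq_inv_iff_eq]
    refine ⟨ρ (SemidirectProduct.inl k) (Pt.base i), ?_, ?_⟩
    · change ρ t _ = _
      rw [hfix]
      simp [hi]
    · intro x hx
      have hx' := (hfix x).1 hx
      rw [← Equiv.Perm.inv_eq_iff_eq]
      generalize (ρ (SemidirectProduct.inl k))⁻¹ x = z at hx' ⊢
      cases z with
      | base j =>
        rw [smul_base] at hx'
        rw [hu j (base_inj hx')]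
      | free τ m =>
        rw [smul_free] at hx'
        injection hx' with e1 e2
        exact absurd (by simpa using e1) t2

theorem trip_inj {X : Type*} {x y z : X} (h1 : x ≠ y) (h2 : x ≠ z) (h3 : y ≠ z) :
    Function.Injective ![x, y, z] := by
  intro i j h
  fin_cases i <;> fin_cases j <;> simp_all

theorem exists_action' : ∃ act : MulAction GG Pt, @SharplyThreeTransitive GG Pt _ act ∧
    (∀ t : GG, orderOf t = 2 → ∃! x : Pt, t • x = x) := by
  obtain ⟨act, h1, h2, h3⟩ := exists_action
  refine ⟨act, ?_, h3⟩
  intro x y z x' y' z' a b c a' b' c'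
  obtain ⟨g, hg⟩ := h1 _ (trip_inj a b c)
  obtain ⟨g', hg'⟩ := h1 _ (trip_inj a' b' c')
  have hg1 : ∀ i, g • Pt.base i = ![x, y, z] i := hg
  have hg1' : ∀ i, g' • Pt.base i = ![x', y', z'] i := hg'
  have main : ∀ i, (g' * g⁻¹) • ![x, y, z] i = ![x', y', z'] i := by
    intro i
    rw [mul_smul, ← hg1, inv_smul_smul, hg1']
  refine ⟨g' * g⁻¹, ⟨main 0, main 1, main 2⟩, ?_⟩
  rintro k ⟨k0, k1, k2⟩
  have hk : ∀ i, k • ![x, y, z] i = ![x', y', z'] i := by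
    intro i
    fin_cases i
    · exact k0
    · exact k1
    · exact k2
  have := h2 _ (trip_inj a b c) ((g' * g⁻¹)⁻¹ * k) (fun i => by
    change ((g' * g⁻¹)⁻¹ * k) • ![x, y, z] i = _
    rw [mul_smul, hk, ← main, inv_smul_smul])
  exact (inv_mul_eq_one.1 this).symm

end S3T

theorem exists_sharply_three_transitive_noncommuting_involutions :
    Nonempty SharplyThreeTransitiveCharTwoWitness := by
  obtain ⟨act, h1, h2⟩ := S3T.exists_action'
  have ho : ∀ t : ULift S3T.GG, orderOf t = 2 → orderOf t.down = 2 := by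
    intro t ht
    have h := MulEquiv.orderOf_eq (MulEquiv.ulift : ULift S3T.GG ≃* S3T.GG) t
    exact h.trans ht
  refine ⟨⟨ULift S3T.GG, ULift S3T.Pt, inferInstance, ?_, ?_, ?_⟩⟩
  · rintro ⟨x⟩ ⟨y⟩ ⟨z⟩ ⟨x'⟩ ⟨y'⟩ ⟨z'⟩ a b c a' b' c'
    have ne : ∀ {p q : S3T.Pt}, ULift.up p ≠ ULift.up q → p ≠ q := fun h e => h (congrArg _ e)
    obtain ⟨g, ⟨e1, e2, e3⟩, hu⟩ := h1 x y z x' y' z' (ne a) (ne b) (ne c) (ne a') (ne b') (ne c')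
    refine ⟨⟨g⟩, ⟨congrArg ULift.up e1, congrArg ULift.up e2, congrArg ULift.up e3⟩, ?_⟩
    rintro ⟨k⟩ ⟨k1, k2, k3⟩
    exact congrArg ULift.up (hu k ⟨congrArg ULift.down k1, congrArg ULift.down k2,
      congrArg ULift.down k3⟩)
  · intro t ht
    obtain ⟨x, hx, hu⟩ := h2 t.down (ho t ht)
    refine ⟨⟨x⟩, congrArg ULift.up hx, ?_⟩
    rintro ⟨y⟩ hy
    exact congrArg ULift.up (hu y (congrArg ULift.down hy))
  · intro s t hs ht hst h
    refine S3T.no_commute s.down t.down (ho s hs) (ho t ht) ?_ (congrArg ULift.down h)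
    intro e
    exact hst (ULift.ext _ _ e)
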